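/- Mollification identity with rotations (identity (BIGE1)): Let η ∈ C_c^∞((−1,1)) be even with 0 ≤ η ≤ 1, η ≡ 1 in a neighbourhood of 0 and ∫η = 1, and η_ε(t) = η(t/ε)/ε. Let θ ∈ W^{1,∞}(ℝ;ℝ) and Q(t) the 2×2 rotation matrix of angle θ(t). Let l : ℝ → ℝ² be bounded, continuous, and compactly supported, and let τ > 0. Define l_ε(t) = Q(t)∫_ℝ η_ε(t−s) Q(s)ᵀ l(s) ds and L_ε(s) = ∫_ℝ η_ε(s−t) Q(s) Q(t)ᵀ l_ε(t) dt. Then, as ε → 0, ∫₀^τ l_ε'(t)·l_ε(t) dt = −∫₀^τ l(s)·L_ε'(s) ds + l(τ)·L_ε(τ) − l(0)·L_ε(0) + o(1). -/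

import Mathlib

noncomputable section
open MeasureTheory Set Filter Topology

abbrev V2 : Type := EuclideanSpace ℝ (Fin 2)

/-- the mollifier `η_ε(t) = η(t/ε)/ε` -/
def moll (η : ℝ → ℝ) (ε : ℝ) (t : ℝ) : ℝ := η (t / ε) / ε

/-- the planar rotation of angle `θ` -/
def rot2 (θ : ℝ) (x : V2) : V2 :=
  !₂[Real.cos θ * x 0 - Real.sin θ * x 1, Real.sin θ * x 0 + Real.cos θ * x 1]

def dot2 (a b : V2) : ℝ := a 0 * b 0 + a 1 * b 1

/-- `l_ε(t) = Q(t) ∫ η_ε(t-s) Q(s)ᵀ l(s) ds` -/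
def lmoll (η : ℝ → ℝ) (θ : ℝ → ℝ) (l : ℝ → V2) (ε : ℝ) (t : ℝ) : V2 :=
  rot2 (θ t) (∫ s : ℝ, moll η ε (t - s) • rot2 (-(θ s)) (l s))

/-- `L_ε(s) = ∫ η_ε(s-t) Q(s) Q(t)ᵀ l_ε(t) dt` -/
def Lmoll (η : ℝ → ℝ) (θ : ℝ → ℝ) (l : ℝ → V2) (ε : ℝ) (s : ℝ) : V2 :=
  ∫ t : ℝ, moll η ε (s - t) • rot2 (θ s) (rot2 (-(θ t)) (lmoll η θ l ε t))

/-- the componentwise time derivative of a planar curve -/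
def dVec (f : ℝ → V2) (t : ℝ) : V2 := !₂[deriv (fun s => f s 0) t, deriv (fun s => f s 1) t]

/-- scalar mollification -/
def mo (k g : ℝ → ℝ) (t : ℝ) : ℝ := ∫ s : ℝ, g s * k (t - s)

theorem mo_eq_conv (k g : ℝ → ℝ) :
    mo k g = convolution g k (ContinuousLinearMap.mul ℝ ℝ) volume := by
  funext t; rfl

theorem mo_cont (k g : ℝ → ℝ) (hk : Continuous k) (hks : HasCompactSupport k)
    (hg : Continuous g) : Continuous (mo k g) := by
  rw [mo_eq_conv]
  exact hks.continuous_convolution_right _ hg.locallyIntegrable hk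

theorem mo_deriv (k g : ℝ → ℝ) (hk : ContDiff ℝ 1 k) (hks : HasCompactSupport k)
    (hg : Continuous g) (t : ℝ) : HasDerivAt (mo k g) (mo (deriv k) g t) t := by
  rw [mo_eq_conv, mo_eq_conv]
  exact hks.hasDerivAt_convolution_right _ hg.locallyIntegrable hk t

theorem mo_scale (k g : ℝ → ℝ) (ε : ℝ) (hε : 0 < ε) (t : ℝ) :
    mo (moll k ε) g t = ∫ u : ℝ, g (t - ε * u) * k u := by
  have h1 := integral_sub_left_eq_self (fun s => g s * moll k ε (t - s)) volume t
  have h2 := Measure.integral_comp_mul_left (fun s => g (t - s) * moll k ε (t - (t - s))) ε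
  unfold mo
  rw [← h1]
  have h3 : (fun u => g (t - ε * u) * k u)
      = fun u => ε * (g (t - ε * u) * moll k ε (t - (t - ε * u))) := by
    funext u
    have : (ε * u) / ε = u := by field_simp
    simp only [moll, sub_sub_cancel, this]
    field_simp
  rw [h3, integral_const_mul, h2, abs_of_pos (inv_pos.2 hε)]
  simp only [smul_eq_mul]
  field_simp

theorem moll_cont (k : ℝ → ℝ) (ε : ℝ) (hk : Continuous k) : Continuous (moll k ε) := by
  unfold moll; fun_prop

theorem moll_supp (k : ℝ → ℝ) (ε : ℝ) (hε : 0 < ε) (hk : HasCompactSupport k) :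
    HasCompactSupport (moll k ε) := by
  have h : HasCompactSupport (fun t => k (ε⁻¹ • t)) := hk.comp_smul (inv_ne_zero hε.ne')
  have h2 : HasCompactSupport (fun t => k (ε⁻¹ • t) * ε⁻¹) := h.mul_right (f' := fun _ => ε⁻¹)
  convert h2 using 1
  funext t
  simp [moll, div_eq_mul_inv, mul_comm]

theorem moll_diff (k : ℝ → ℝ) (ε : ℝ) (hk : ContDiff ℝ 1 k) : ContDiff ℝ 1 (moll k ε) := by
  unfold moll
  exact (hk.comp (contDiff_id.div_const ε)).div_const ε

theorem moll_deriv (k : ℝ → ℝ) (ε : ℝ) (hk : ContDiff ℝ 1 k) :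
    deriv (moll k ε) = fun t => ε⁻¹ * moll (deriv k) ε t := by
  funext t
  have h : HasDerivAt k (deriv k (t / ε)) (t / ε) :=
    (hk.differentiable (by norm_num) _).hasDerivAt
  have h2 : HasDerivAt (fun t => t / ε) (1 / ε) t := (hasDerivAt_id t).div_const ε
  have h3 := (h.comp t h2).div_const ε
  have h4 : HasDerivAt (moll k ε) (deriv k (t / ε) * (1 / ε) / ε) t := h3
  rw [h4.deriv]
  simp only [moll, div_eq_mul_inv]; ring

theorem mo_deriv_scale (k g : ℝ → ℝ) (hk : ContDiff ℝ 1 k) (ε : ℝ) (t : ℝ) :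
    mo (deriv (moll k ε)) g t = ε⁻¹ * mo (moll (deriv k) ε) g t := by
  rw [moll_deriv k ε hk]
  unfold mo
  rw [← integral_const_mul]
  congr 1; funext s; ring

theorem kern_int (a b : ℝ → ℝ) (ha : Continuous a) (hb : Continuous b)
    (has : HasCompactSupport a) (hbs : HasCompactSupport b) :
    Integrable (fun p : ℝ × ℝ => a p.1 * b p.2) (volume.prod volume) :=
  (ha.integrable_of_hasCompactSupport has).mul_prod (hb.integrable_of_hasCompactSupport hbs)

theorem mo_mo (a b g : ℝ → ℝ) (ha : Continuous a) (hb : Continuous b)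
    (has : HasCompactSupport a) (hbs : HasCompactSupport b) (hg : Continuous g)
    (M : ℝ) (hM : ∀ t, |g t| ≤ M) (ε : ℝ) (hε : 0 < ε) (s : ℝ) :
    mo (moll a ε) (mo (moll b ε) g) s
      = ∫ p : ℝ × ℝ, g (s - ε * (p.1 + p.2)) * (a p.1 * b p.2) ∂(volume.prod volume) := by
  rw [mo_scale a _ ε hε, integral_prod]
  · congr 1; funext u
    rw [mo_scale b _ ε hε, ← integral_mul_const]
    congr 1; funext v
    simp only
    rw [show s - ε * u - ε * v = s - ε * (u + v) by ring]; ring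
  · exact (kern_int a b ha hb has hbs).bdd_mul (c := M) (by fun_prop)
      (Eventually.of_forall fun p => by simpa using hM _)

/-- convergence of kernel averages -/
theorem avg_tendsto (k : ℝ × ℝ → ℝ) (hk : Integrable k (volume.prod volume))
    (w : ℝ × ℝ → ℝ) (hw : Continuous w)
    (E : ℝ → ℝ) (hE : Continuous E) (M : ℝ) (hM : ∀ t, |E t| ≤ M) :
    Tendsto (fun ε : ℝ => ∫ p, E (ε * w p) * k p ∂(volume.prod volume)) (𝓝[>] 0)
      (𝓝 (E 0 * ∫ p, k p ∂(volume.prod volume))) := by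
  rw [← integral_const_mul]
  apply tendsto_integral_filter_of_dominated_convergence (fun p => M * ‖k p‖)
  · refine Eventually.of_forall fun ε => ?_
    exact (show Continuous fun p => E (ε * w p) by fun_prop).aestronglyMeasurable.mul
      hk.aestronglyMeasurable
  · refine Eventually.of_forall fun ε => Eventually.of_forall fun p => ?_
    rw [norm_mul]
    exact mul_le_mul_of_nonneg_right (hM _) (norm_nonneg _)
  · exact hk.norm.const_mul M
  · refine Eventually.of_forall fun p => ?_
    have : Continuous fun ε : ℝ => E (ε * w p) * k p := by fun_prop
    have h := this.tendsto 0
    simp only [zero_mul] at h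
    exact h.mono_left nhdsWithin_le_nhds

theorem mo_tendsto (η g : ℝ → ℝ) (hη : Continuous η) (hηs : HasCompactSupport η)
    (hη_int : (∫ t : ℝ, η t) = 1) (hg : Continuous g) (M : ℝ) (hM : ∀ t, |g t| ≤ M) (s : ℝ) :
    Tendsto (fun ε => mo (moll η ε) g s) (𝓝[>] 0) (𝓝 (g s)) := by
  have key : Tendsto (fun ε : ℝ => ∫ u, g (s - ε * u) * η u) (𝓝[>] 0)
      (𝓝 (∫ u, g s * η u)) := by
    have hk := hη.integrable_of_hasCompactSupport (μ := volume) hηs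
    apply tendsto_integral_filter_of_dominated_convergence (fun p => M * ‖η p‖)
    · exact Eventually.of_forall fun ε => by fun_prop
    · refine Eventually.of_forall fun ε => Eventually.of_forall fun p => ?_
      rw [norm_mul]
      exact mul_le_mul_of_nonneg_right (hM _) (norm_nonneg _)
    · exact hk.norm.const_mul M
    · refine Eventually.of_forall fun p => ?_
      have : Continuous fun ε : ℝ => g (s - ε * p) * η p := by fun_prop
      have h := this.tendsto 0
      simp only [zero_mul, sub_zero] at h
      exact h.mono_left nhdsWithin_le_nhds
  rw [integral_const_mul, hη_int, mul_one] at key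
  refine key.congr' ?_
  filter_upwards [self_mem_nhdsWithin] with ε hε
  rw [mo_scale η g ε hε]

theorem momo_tendsto (η g : ℝ → ℝ) (hη : Continuous η) (hηs : HasCompactSupport η)
    (hη_int : (∫ t : ℝ, η t) = 1) (hg : Continuous g) (M : ℝ) (hM : ∀ t, |g t| ≤ M) (s : ℝ) :
    Tendsto (fun ε => mo (moll η ε) (mo (moll η ε) g) s) (𝓝[>] 0) (𝓝 (g s)) := by
  have h := avg_tendsto _ (kern_int η η hη hη hηs hηs) (fun p => p.1 + p.2) (by fun_prop)
    (fun r => g (s - r)) (by fun_prop) M (fun t => hM _)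
  rw [integral_prod_mul, hη_int] at h
  simp only [sub_zero, mul_one] at h
  refine h.congr' ?_
  filter_upwards [self_mem_nhdsWithin] with ε hε
  rw [mo_mo η η g hη hη hηs hηs hg M hM ε hε]

theorem momo_bound (η g : ℝ → ℝ) (hη : Continuous η) (hηs : HasCompactSupport η)
    (hη_nonneg : ∀ t, 0 ≤ η t)
    (hη_int : (∫ t : ℝ, η t) = 1) (hg : Continuous g) (M : ℝ) (hM : ∀ t, |g t| ≤ M)
    (ε : ℝ) (hε : 0 < ε) (s : ℝ) :
    |mo (moll η ε) (mo (moll η ε) g) s| ≤ M := by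
  rw [mo_mo η η g hη hη hηs hηs hg M hM ε hε]
  have hk := kern_int η η hη hη hηs hηs
  have h := norm_integral_le_of_norm_le (μ := (volume.prod volume : Measure (ℝ × ℝ)))
    (f := fun p => g (s - ε * (p.1 + p.2)) * (η p.1 * η p.2)) (hk.const_mul M)
    (Eventually.of_forall fun p => by
      rw [norm_mul, Real.norm_of_nonneg (mul_nonneg (hη_nonneg p.1) (hη_nonneg p.2))]
      exact mul_le_mul_of_nonneg_right (hM _) (mul_nonneg (hη_nonneg p.1) (hη_nonneg p.2)))
  rw [integral_const_mul, integral_prod_mul, hη_int] at h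
  simpa using h

/-- autocorrelation difference -/
theorem corr_diff (g : ℝ → ℝ) (hg : Continuous g) (τ r : ℝ) :
    (∫ s in (0:ℝ)..τ, g s * g (s - r)) - (∫ s in (0:ℝ)..τ, g s * g (s + r))
      = r * ((∫ y in (0:ℝ)..1, g (0 + r * y) * g (0 + r * y - r))
          - (∫ y in (0:ℝ)..1, g (τ + r * y) * g (τ + r * y - r))) := by
  have h1 := intervalIntegral.mul_integral_comp_add_mul (a := 0) (b := 1)
    (f := fun s => g s * g (s - r)) r 0
  have h2 := intervalIntegral.mul_integral_comp_add_mul (a := 0) (b := 1)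
    (f := fun s => g s * g (s - r)) r τ
  have h3 := intervalIntegral.integral_comp_add_right (a := 0) (b := τ)
    (fun s => g s * g (s - r)) r
  have hc : Continuous fun s => g s * g (s - r) := by fun_prop
  have hi : ∀ a b, IntervalIntegrable (fun s => g s * g (s - r)) volume a b :=
    fun a b => hc.intervalIntegrable a b
  have h4 : (∫ s in (0:ℝ)..τ, g s * g (s + r)) = ∫ s in (0+r)..(τ+r), g s * g (s - r) := by
    rw [← h3]
    congr 1; funext s; rw [add_sub_cancel_right, mul_comm]
  rw [mul_sub, h1, h2, h4]
  simp only [mul_zero, mul_one, add_zero, zero_add]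
  have e1 := intervalIntegral.integral_add_adjacent_intervals (hi 0 r) (hi r (τ + r))
  have e2 := intervalIntegral.integral_add_adjacent_intervals (hi 0 τ) (hi τ (τ + r))
  linarith

theorem kern_moment (η : ℝ → ℝ) (hη : ContDiff ℝ 1 η) (hηs : HasCompactSupport η)
    (hη_int : (∫ t : ℝ, η t) = 1) :
    Integrable (fun p : ℝ × ℝ => (p.1 + p.2) * (deriv η p.1 * η p.2)) (volume.prod volume) ∧
    ∫ p : ℝ × ℝ, (p.1 + p.2) * (deriv η p.1 * η p.2) ∂(volume.prod volume) = -1 := by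
  have hc := hη.continuous
  have hd : Continuous (deriv η) := hη.continuous_deriv le_rfl
  have hds : HasCompactSupport (deriv η) := hηs.deriv
  have hD : ∀ x, HasDerivAt η (deriv η x) x :=
    fun x => (hη.differentiable (by norm_num) x).hasDerivAt
  have c1 : Continuous fun x => x * deriv η x := by fun_prop
  have c2 : Continuous fun x => x * η x := by fun_prop
  have s1 : HasCompactSupport fun x => x * deriv η x := hds.mul_left (f := fun x => x)
  have s2 : HasCompactSupport fun x => x * η x := hηs.mul_left (f := fun x => x)
  have i0 := hc.integrable_of_hasCompactSupport (μ := volume) hηs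
  have i1 := kern_int _ _ c1 hc s1 hηs
  have i2 := kern_int _ _ hd c2 hds s2
  have e : (fun p : ℝ × ℝ => (p.1 + p.2) * (deriv η p.1 * η p.2))
      = fun p => p.1 * deriv η p.1 * η p.2 + deriv η p.1 * (p.2 * η p.2) := by
    funext p; ring
  have z : ∫ x, deriv η x = 0 := integral_eq_zero_of_hasDerivAt_of_integrable hD
    (hd.integrable_of_hasCompactSupport hds) i0
  have w : ∫ x, x * deriv η x = -1 := by
    have := integral_mul_deriv_eq_deriv_mul_of_integrable (u := fun x : ℝ => x)
      (u' := fun _ => (1:ℝ)) (v := η) (v' := deriv η) (fun x _ => hasDerivAt_id x)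
      (fun x _ => hD x) (c1.integrable_of_hasCompactSupport s1)
      (by simpa [Pi.mul_def] using i0) (c2.integrable_of_hasCompactSupport s2)
    simpa [hη_int] using this
  rw [e]
  refine ⟨i1.add i2, ?_⟩
  rw [integral_add i1 i2, integral_prod_mul (fun x => x * deriv η x) η,
    integral_prod_mul (deriv η) (fun x => x * η x), z, w, hη_int]
  ring

theorem main_scalar (η g : ℝ → ℝ) (hη : ContDiff ℝ 1 η) (hηs : HasCompactSupport η)
    (hη_even : ∀ t, η (-t) = η t)
    (hη_int : (∫ t : ℝ, η t) = 1) (hg : Continuous g) (M : ℝ) (hM : ∀ t, |g t| ≤ M)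
    (τ : ℝ) (hτ : 0 < τ) :
    Tendsto (fun ε => ∫ s in Ioc (0:ℝ) τ,
        g s * mo (deriv (moll η ε)) (mo (moll η ε) g) s) (𝓝[>] 0)
      (𝓝 ((g τ ^ 2 - g 0 ^ 2) / 2)) := by
  have hc := hη.continuous
  have hd : Continuous (deriv η) := hη.continuous_deriv le_rfl
  have hds : HasCompactSupport (deriv η) := hηs.deriv
  have hodd : ∀ t, deriv η (-t) = -deriv η t := by
    intro t
    have h1 : (fun t => η (-t)) = η := funext hη_even
    have h2 := deriv_comp_neg η t
    rw [h1] at h2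
    linarith
  obtain ⟨im, em⟩ := kern_moment η hη hηs hη_int
  have hk := kern_int _ _ hd hc hds hηs
  set D : ℝ → ℝ → ℝ := fun x r => ∫ y in (0:ℝ)..1, g (x + r * y) * g (x + r * y - r) with hDdef
  have hM0 : 0 ≤ M := (abs_nonneg _).trans (hM 0)
  have hgg : ∀ a b, |g a * g b| ≤ M * M := fun a b => by
    rw [abs_mul]; exact mul_le_mul (hM a) (hM b) (abs_nonneg _) hM0
  have hDc : ∀ x, Continuous (D x) := fun x =>
    intervalIntegral.continuous_parametric_intervalIntegral_of_continuous' (by fun_prop) 0 1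
  have hDb : ∀ x r, |D x r| ≤ M * M := fun x r => by
    have := intervalIntegral.norm_integral_le_of_norm_le_const (a := 0) (b := 1) (C := M * M)
      (f := fun y => g (x + r * y) * g (x + r * y - r)) (fun y _ => hgg _ _)
    simpa using this
  have hD0 : ∀ x, D x 0 = g x ^ 2 := fun x => by simp [hDdef, pow_two]
  have h := avg_tendsto _ im (fun p => p.1 + p.2) (by fun_prop)
    (fun r => (D 0 r - D τ r) / 2) (((hDc 0).sub (hDc τ)).div_const 2) (M * M)
    (fun r => by
      have a := abs_le.1 (hDb 0 r); have b := abs_le.1 (hDb τ r)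
      rw [abs_le]; constructor <;> linarith [a.1, a.2, b.1, b.2])
  rw [em] at h
  simp only [hD0] at h
  rw [show (g 0 ^ 2 - g τ ^ 2) / 2 * (-1) = (g τ ^ 2 - g 0 ^ 2) / 2 by ring] at h
  refine h.congr' ?_
  filter_upwards [self_mem_nhdsWithin] with ε hε
  have hε : 0 < ε := hε
  symm
  have st1 : ∀ s, g s * mo (deriv (moll η ε)) (mo (moll η ε) g) s
      = ∫ p : ℝ × ℝ, ε⁻¹ * (g s * g (s - ε * (p.1 + p.2)) * (deriv η p.1 * η p.2))
        ∂(volume.prod volume) := by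
    intro s
    rw [mo_deriv_scale η _ hη, mo_mo (deriv η) η g hd hc hds hηs hg M hM ε hε,
      ← integral_const_mul, ← integral_const_mul]
    congr 1; funext p; ring
  simp_rw [st1]
  rw [integral_integral_swap]
  swap
  · have h1 : Integrable (fun _ : ℝ => (1:ℝ)) (volume.restrict (Ioc (0:ℝ) τ)) := by
      exact integrable_const _
    have h2 := h1.mul_prod hk
    have h3 := (h2.bdd_mul (c := M * M)
      (f := fun z : ℝ × (ℝ × ℝ) => g z.1 * g (z.1 - ε * (z.2.1 + z.2.2)))
      (Continuous.aestronglyMeasurable (by fun_prop))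
      (Eventually.of_forall fun p => hgg _ _)).const_mul ε⁻¹
    refine h3.congr (Eventually.of_forall fun z => ?_)
    simp [Function.uncurry]
  set A : ℝ → ℝ := fun r => ∫ s in (0:ℝ)..τ, g s * g (s - r) with hA
  have st2 : ∀ p : ℝ × ℝ, (∫ s in Ioc (0:ℝ) τ,
      ε⁻¹ * (g s * g (s - ε * (p.1 + p.2)) * (deriv η p.1 * η p.2)))
      = ε⁻¹ * (A (ε * (p.1 + p.2)) * (deriv η p.1 * η p.2)) := by
    intro p
    rw [integral_const_mul, integral_mul_const, hA]
    simp only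
    rw [intervalIntegral.integral_of_le hτ.le]
  simp_rw [st2]
  have hAc : Continuous A :=
    intervalIntegral.continuous_parametric_intervalIntegral_of_continuous' (by fun_prop) 0 τ
  have hAb : ∀ r, |A r| ≤ M * M * τ := fun r => by
    have := intervalIntegral.norm_integral_le_of_norm_le_const (a := 0) (b := τ) (C := M * M)
      (f := fun s => g s * g (s - r)) (fun y _ => hgg _ _)
    rw [sub_zero, abs_of_pos hτ] at this
    exact this
  have hI : Integrable (fun p : ℝ × ℝ => ε⁻¹ * (A (ε * (p.1 + p.2)) * (deriv η p.1 * η p.2)))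
      (volume.prod volume) :=
    (hk.bdd_mul (c := M * M * τ) (Continuous.aestronglyMeasurable (by fun_prop))
      (Eventually.of_forall fun p => hAb _)).const_mul _
  have hn := integral_neg_eq_self
    (fun p : ℝ × ℝ => ε⁻¹ * (A (ε * (p.1 + p.2)) * (deriv η p.1 * η p.2))) (volume.prod volume)
  have hI' := hI.comp_neg
  have hs : (∫ p : ℝ × ℝ, ε⁻¹ * (A (ε * (p.1 + p.2)) * (deriv η p.1 * η p.2))
        ∂(volume.prod volume))
      = ((∫ p : ℝ × ℝ, ε⁻¹ * (A (ε * (p.1 + p.2)) * (deriv η p.1 * η p.2))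
        ∂(volume.prod volume)) + (∫ p : ℝ × ℝ, (fun p : ℝ × ℝ => ε⁻¹ * (A (ε * (p.1 + p.2)) *
          (deriv η p.1 * η p.2))) (-p) ∂(volume.prod volume))) / 2 := by
    rw [hn]; ring
  rw [hs, ← integral_add hI hI', ← integral_div]
  congr 1; funext p
  have cd := corr_diff g hg τ (ε * (p.1 + p.2))
  have hA' : A (ε * (-p.1 + -p.2)) = ∫ s in (0:ℝ)..τ, g s * g (s + ε * (p.1 + p.2)) := by
    simp only [hA]
    congr 1; funext s; congr 2; ring
  simp only [Prod.fst_neg, Prod.snd_neg, hodd, hη_even]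
  rw [hA']
  have cd' : A (ε * (p.1 + p.2)) - (∫ s in (0:ℝ)..τ, g s * g (s + ε * (p.1 + p.2)))
    = ε * (p.1 + p.2) * (D 0 (ε * (p.1 + p.2)) - D τ (ε * (p.1 + p.2))) := cd
  rw [show A (ε * (p.1 + p.2)) = (∫ s in (0:ℝ)..τ, g s * g (s + ε * (p.1 + p.2))) +
    ε * (p.1 + p.2) * (D 0 (ε * (p.1 + p.2)) - D τ (ε * (p.1 + p.2))) by linarith]
  field_simp
  ring

theorem coord_int (k : ℝ → ℝ) (F : ℝ → V2) (hk : Continuous k) (hks : HasCompactSupport k)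
    (hF : Continuous F) (t : ℝ) (i : Fin 2) :
    (∫ s : ℝ, k (t - s) • F s) i = mo k (fun s => F s i) t := by
  have hsupp : HasCompactSupport fun s => k (t - s) :=
    hks.comp_homeomorph (Homeomorph.subLeft t)
  have hI : Integrable (fun s => k (t - s) • F s) :=
    Continuous.integrable_of_hasCompactSupport (by fun_prop) (hsupp.smul_right (f' := F))
  have h := (EuclideanSpace.proj (𝕜 := ℝ) i : V2 →L[ℝ] ℝ).integral_comp_comm hI
  have h2 : (∫ s : ℝ, k (t - s) • F s) i
    = (EuclideanSpace.proj (𝕜 := ℝ) i : V2 →L[ℝ] ℝ) (∫ s : ℝ, k (t - s) • F s) := rfl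
  rw [h2, ← h]
  unfold mo
  congr 1; funext s
  simp [mul_comm]

theorem rot2_zero (a : ℝ) (x : V2) : rot2 a x 0 = Real.cos a * x 0 - Real.sin a * x 1 := by
  simp [rot2]

theorem rot2_one (a : ℝ) (x : V2) : rot2 a x 1 = Real.sin a * x 0 + Real.cos a * x 1 := by
  simp [rot2]

theorem rot2_cont (a : ℝ → ℝ) (x : ℝ → V2) (ha : Continuous a) (hx : Continuous x) :
    Continuous fun t => rot2 (a t) (x t) := by
  unfold rot2
  have h0 : Continuous fun t => x t 0 := by fun_prop
  have h1 : Continuous fun t => x t 1 := by fun_prop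
  refine (PiLp.continuous_toLp 2 _).comp (continuous_pi fun i => ?_)
  fin_cases i <;> simp <;> fun_prop

/-- components of `Qᵀ l` -/
def gc (θ : ℝ → ℝ) (l : ℝ → V2) (i : Fin 2) (s : ℝ) : ℝ := rot2 (-(θ s)) (l s) i

theorem gc_cont (θ : ℝ → ℝ) (l : ℝ → V2) (hθ : Continuous θ) (hl : Continuous l) (i : Fin 2) :
    Continuous (gc θ l i) := by
  have := rot2_cont (fun s => -(θ s)) l hθ.neg hl
  unfold gc
  fun_prop

theorem gc_zero (θ : ℝ → ℝ) (l : ℝ → V2) (s : ℝ) :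
    gc θ l 0 s = Real.cos (θ s) * l s 0 + Real.sin (θ s) * l s 1 := by
  simp [gc, rot2_zero]

theorem gc_one (θ : ℝ → ℝ) (l : ℝ → V2) (s : ℝ) :
    gc θ l 1 s = -Real.sin (θ s) * l s 0 + Real.cos (θ s) * l s 1 := by
  simp [gc, rot2_one]

theorem gc_bdd (θ : ℝ → ℝ) (l : ℝ → V2) (hθ : Continuous θ) (hl : Continuous l)
    (hs : HasCompactSupport l) : ∃ M, ∀ i t, |gc θ l i t| ≤ M := by
  have h : ∀ i, ∃ M, ∀ t, ‖gc θ l i t‖ ≤ M := fun i => by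
    refine HasCompactSupport.exists_bound_of_continuous (hs.mono ?_) (gc_cont θ l hθ hl i)
    intro t ht hz
    apply ht
    fin_cases i <;> simp [gc_zero, gc_one, hz]
  obtain ⟨M0, h0⟩ := h 0
  obtain ⟨M1, h1⟩ := h 1
  refine ⟨max M0 M1, fun i t => ?_⟩
  fin_cases i
  · exact (h0 t).trans (le_max_left _ _)
  · exact (h1 t).trans (le_max_right _ _)

section
variable (η θ : ℝ → ℝ) (l : ℝ → V2) (ε : ℝ)

theorem m_coord (hη : Continuous η) (hηs : HasCompactSupport η) (hθ : Continuous θ)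
    (hl : Continuous l) (hε : 0 < ε) (t : ℝ) (i : Fin 2) :
    (∫ s : ℝ, moll η ε (t - s) • rot2 (-(θ s)) (l s)) i = mo (moll η ε) (gc θ l i) t :=
  coord_int _ _ (moll_cont η ε hη) (moll_supp η ε hε hηs)
    (rot2_cont (fun s => -(θ s)) l hθ.neg hl) t i

theorem lmoll_zero (hη : Continuous η) (hηs : HasCompactSupport η) (hθ : Continuous θ)
    (hl : Continuous l) (hε : 0 < ε) (t : ℝ) :
    lmoll η θ l ε t 0 = Real.cos (θ t) * mo (moll η ε) (gc θ l 0) t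
      - Real.sin (θ t) * mo (moll η ε) (gc θ l 1) t := by
  rw [lmoll, rot2_zero, m_coord η θ l ε hη hηs hθ hl hε, m_coord η θ l ε hη hηs hθ hl hε]

theorem lmoll_one (hη : Continuous η) (hηs : HasCompactSupport η) (hθ : Continuous θ)
    (hl : Continuous l) (hε : 0 < ε) (t : ℝ) :
    lmoll η θ l ε t 1 = Real.sin (θ t) * mo (moll η ε) (gc θ l 0) t
      + Real.cos (θ t) * mo (moll η ε) (gc θ l 1) t := by
  rw [lmoll, rot2_one, m_coord η θ l ε hη hηs hθ hl hε, m_coord η θ l ε hη hηs hθ hl hε]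

theorem lmoll_cont (hη : Continuous η) (hηs : HasCompactSupport η) (hθ : Continuous θ)
    (hl : Continuous l) (hε : 0 < ε) : Continuous (lmoll η θ l ε) := by
  have h : ∀ i, Continuous (mo (moll η ε) (gc θ l i)) := fun i =>
    mo_cont _ _ (moll_cont η ε hη) (moll_supp η ε hε hηs) (gc_cont θ l hθ hl i)
  have h0 := h 0
  have h1 := h 1
  have : lmoll η θ l ε = fun t => (!₂[Real.cos (θ t) * mo (moll η ε) (gc θ l 0) t
      - Real.sin (θ t) * mo (moll η ε) (gc θ l 1) t, Real.sin (θ t) * mo (moll η ε) (gc θ l 0) t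
      + Real.cos (θ t) * mo (moll η ε) (gc θ l 1) t] : V2) := by
    funext t; ext i
    fin_cases i
    · simpa using lmoll_zero η θ l ε hη hηs hθ hl hε t
    · simpa using lmoll_one η θ l ε hη hηs hθ hl hε t
  rw [this]
  refine (PiLp.continuous_toLp 2 _).comp (continuous_pi fun i => ?_)
  fin_cases i <;> simp <;> fun_prop

theorem rot_lmoll (hη : Continuous η) (hηs : HasCompactSupport η) (hθ : Continuous θ)
    (hl : Continuous l) (hε : 0 < ε) (t : ℝ) (i : Fin 2) :
    rot2 (-(θ t)) (lmoll η θ l ε t) i = mo (moll η ε) (gc θ l i) t := by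
  have hsc := Real.sin_sq_add_cos_sq (θ t)
  fin_cases i
  · simp only [Fin.zero_eta, rot2_zero, lmoll_zero η θ l ε hη hηs hθ hl hε,
      lmoll_one η θ l ε hη hηs hθ hl hε, Real.cos_neg, Real.sin_neg]
    linear_combination (mo (moll η ε) (gc θ l 0) t) * hsc
  · simp only [Fin.mk_one, rot2_one, lmoll_zero η θ l ε hη hηs hθ hl hε,
      lmoll_one η θ l ε hη hηs hθ hl hε, Real.cos_neg, Real.sin_neg]
    linear_combination (mo (moll η ε) (gc θ l 1) t) * hsc

theorem mo_lin (k f g : ℝ → ℝ) (hk : Continuous k) (hks : HasCompactSupport k)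
    (hf : Continuous f) (hg : Continuous g) (a b t : ℝ) :
    mo k (fun s => a * f s + b * g s) t = a * mo k f t + b * mo k g t := by
  have hsupp : HasCompactSupport fun s => k (t - s) :=
    hks.comp_homeomorph (Homeomorph.subLeft t)
  have hI : ∀ f : ℝ → ℝ, Continuous f → Integrable (fun s => f s * k (t - s)) := fun f hf =>
    Continuous.integrable_of_hasCompactSupport (by fun_prop) (hsupp.mul_left (f := f))
  unfold mo
  rw [← integral_const_mul, ← integral_const_mul,
    ← integral_add ((hI f hf).const_mul a) ((hI g hg).const_mul b)]
  congr 1; funext s; ring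

theorem Lmoll_zero (hη : Continuous η) (hηs : HasCompactSupport η) (hθ : Continuous θ)
    (hl : Continuous l) (hε : 0 < ε) (t : ℝ) :
    Lmoll η θ l ε t 0 = Real.cos (θ t) * mo (moll η ε) (mo (moll η ε) (gc θ l 0)) t
      - Real.sin (θ t) * mo (moll η ε) (mo (moll η ε) (gc θ l 1)) t := by
  have hm := moll_cont η ε hη
  have hms := moll_supp η ε hε hηs
  have hc := rot2_cont (fun s => -(θ s)) _ hθ.neg (lmoll_cont η θ l ε hη hηs hθ hl hε)
  rw [Lmoll, coord_int _ _ hm hms (rot2_cont (fun _ => θ t) _ continuous_const hc)]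
  simp only [rot2_zero (θ t), rot_lmoll η θ l ε hη hηs hθ hl hε]
  have := mo_lin _ _ _ hm hms (mo_cont _ _ hm hms (gc_cont θ l hθ hl 0))
    (mo_cont _ _ hm hms (gc_cont θ l hθ hl 1)) (Real.cos (θ t)) (-Real.sin (θ t)) t
  simpa [← sub_eq_add_neg] using this

theorem Lmoll_one (hη : Continuous η) (hηs : HasCompactSupport η) (hθ : Continuous θ)
    (hl : Continuous l) (hε : 0 < ε) (t : ℝ) :
    Lmoll η θ l ε t 1 = Real.sin (θ t) * mo (moll η ε) (mo (moll η ε) (gc θ l 0)) t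
      + Real.cos (θ t) * mo (moll η ε) (mo (moll η ε) (gc θ l 1)) t := by
  have hm := moll_cont η ε hη
  have hms := moll_supp η ε hε hηs
  have hc := rot2_cont (fun s => -(θ s)) _ hθ.neg (lmoll_cont η θ l ε hη hηs hθ hl hε)
  rw [Lmoll, coord_int _ _ hm hms (rot2_cont (fun _ => θ t) _ continuous_const hc)]
  simp only [rot2_one (θ t), rot_lmoll η θ l ε hη hηs hθ hl hε]
  exact mo_lin _ _ _ hm hms (mo_cont _ _ hm hms (gc_cont θ l hθ hl 0))
    (mo_cont _ _ hm hms (gc_cont θ l hθ hl 1)) (Real.sin (θ t)) (Real.cos (θ t)) t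

end

/-- derivative of a rotated curve -/
theorem dVec_rot (θ a b : ℝ → ℝ) (f : ℝ → V2) (t a' b' : ℝ)
    (h0 : ∀ t, f t 0 = Real.cos (θ t) * a t - Real.sin (θ t) * b t)
    (h1 : ∀ t, f t 1 = Real.sin (θ t) * a t + Real.cos (θ t) * b t)
    (hθ : DifferentiableAt ℝ θ t) (ha : HasDerivAt a a' t) (hb : HasDerivAt b b' t) :
    dVec f t 0 = Real.cos (θ t) * a' - Real.sin (θ t) * b'
        + deriv θ t * (-Real.sin (θ t) * a t - Real.cos (θ t) * b t) ∧
    dVec f t 1 = Real.sin (θ t) * a' + Real.cos (θ t) * b'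
        + deriv θ t * (Real.cos (θ t) * a t - Real.sin (θ t) * b t) := by
  have hc := hθ.hasDerivAt.cos
  have hs := hθ.hasDerivAt.sin
  have e0 := (hc.mul ha).sub (hs.mul hb)
  have e1 := (hs.mul ha).add (hc.mul hb)
  constructor
  · have : dVec f t 0 = deriv (fun s => f s 0) t := by simp [dVec]
    rw [this, funext h0]
    refine (HasDerivAt.deriv e0).trans ?_
    ring
  · have : dVec f t 1 = deriv (fun s => f s 1) t := by simp [dVec]
    rw [this, funext h1]
    refine (HasDerivAt.deriv e1).trans ?_
    ring

theorem ftc_sq (a a' : ℝ → ℝ) (h : ∀ t, HasDerivAt a (a' t) t) (hc : Continuous a')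
    (τ : ℝ) (hτ : 0 < τ) :
    ∫ t in Ioc (0:ℝ) τ, a' t * a t = (a τ ^ 2 - a 0 ^ 2) / 2 := by
  have hca : Continuous a := continuous_iff_continuousAt.2 fun t => (h t).continuousAt
  rw [← intervalIntegral.integral_of_le hτ.le,
    intervalIntegral.integral_eq_sub_of_hasDerivAt (f := fun t => a t ^ 2 / 2)]
  · ring
  · intro t _
    have h2 : HasDerivAt (fun t => a t * a t / 2) ((a' t * a t + a t * a' t) / 2) t :=
      ((h t).mul (h t)).div_const 2
    have e : (fun t => a t ^ 2 / 2) = fun t => a t * a t / 2 := by funext t; ring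
    rw [e]
    exact h2.congr_deriv (by ring)
  · exact (hc.mul hca).intervalIntegrable _ _

/-- **Identity (BIGE1)**: mollification identity with rotations.
With `l_ε(t) = Q(t) (η_ε ∗ Qᵀ l)(t)` and `L_ε(s) = ∫ η_ε(s-t) Q(s)Q(t)ᵀ l_ε(t) dt`,
one has `∫₀^τ l_ε'·l_ε = -∫₀^τ l·L_ε' + l(τ)·L_ε(τ) - l(0)·L_ε(0) + o(1)` as `ε → 0⁺`. -/
theorem mollification_identity_with_rotations
    (η : ℝ → ℝ) (hη_smooth : ContDiff ℝ (⊤ : ℕ∞) η)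
    (hη_supp : HasCompactSupport η) (hη_supp' : tsupport η ⊆ Ioo (-1 : ℝ) 1)
    (hη_even : ∀ t, η (-t) = η t)
    (hη_nonneg : ∀ t, 0 ≤ η t) (hη_le_one : ∀ t, η t ≤ 1)
    (hη_one : ∀ᶠ t in 𝓝 (0:ℝ), η t = 1)
    (hη_int : (∫ t : ℝ, η t) = 1)
    (θ : ℝ → ℝ) (hθ_lip : ∃ K : NNReal, LipschitzWith K θ) (hθ_bdd : ∃ C : ℝ, ∀ t, |θ t| ≤ C)
    (l : ℝ → V2) (hl_bdd : ∃ C : ℝ, ∀ t, ‖l t‖ ≤ C)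
    (hl_cont : Continuous l) (hl_supp : HasCompactSupport l)
    (τ : ℝ) (hτ : 0 < τ) :
    Tendsto (fun ε : ℝ =>
        (∫ t in Ioc (0:ℝ) τ, dot2 (dVec (lmoll η θ l ε) t) (lmoll η θ l ε t))
          - (-(∫ s in Ioc (0:ℝ) τ, dot2 (l s) (dVec (Lmoll η θ l ε) s))
              + dot2 (l τ) (Lmoll η θ l ε τ) - dot2 (l 0) (Lmoll η θ l ε 0)))
      (𝓝[>] (0:ℝ)) (𝓝 0) := by
  obtain ⟨K, hK⟩ := hθ_lip
  have hθ := hK.continuous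
  have hη : ContDiff ℝ 1 η := hη_smooth.of_le (by exact_mod_cast le_top)
  have hηc := hη.continuous
  have hg := gc_cont θ l hθ hl_cont
  obtain ⟨M, hM⟩ := gc_bdd θ l hθ hl_cont hl_supp
  have hM0 : 0 ≤ M := (abs_nonneg _).trans (hM 0 0)
  have tm := fun i s => mo_tendsto η _ hηc hη_supp hη_int (hg i) M (hM i) s
  have tG := fun i s => momo_tendsto η _ hηc hη_supp hη_int (hg i) M (hM i) s
  have tF := fun i => main_scalar η _ hη hη_supp hη_even hη_int (hg i) M (hM i) τ hτ
  set G : Fin 2 → ℝ → ℝ → ℝ := fun i ε => mo (moll η ε) (mo (moll η ε) (gc θ l i)) with hG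
  have hGc : ∀ i ε, 0 < ε → Continuous (G i ε) := fun i ε hε =>
    mo_cont _ _ (moll_cont η ε hηc) (moll_supp η ε hε hη_supp)
      (mo_cont _ _ (moll_cont η ε hηc) (moll_supp η ε hε hη_supp) (hg i))
  have hGb : ∀ i ε, 0 < ε → ∀ s, |G i ε s| ≤ M := fun i ε hε s =>
    momo_bound η _ hηc hη_supp hη_nonneg hη_int (hg i) M (hM i) ε hε s
  have hbd : ∀ ε, 0 < ε → ∀ s, ‖deriv θ s * (gc θ l 1 s * G 0 ε s - gc θ l 0 s * G 1 ε s)‖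
      ≤ K * (2 * (M * M)) := by
    intro ε hε s
    rw [norm_mul]
    refine mul_le_mul (norm_deriv_le_of_lipschitz hK) ?_ (norm_nonneg _) K.2
    refine (norm_sub_le _ _).trans ?_
    rw [norm_mul, norm_mul]
    have e1 := mul_le_mul (hM 1 s) (hGb 0 ε hε s) (abs_nonneg _) hM0
    have e2 := mul_le_mul (hM 0 s) (hGb 1 ε hε s) (abs_nonneg _) hM0
    simp only [Real.norm_eq_abs]
    linarith
  have hms : ∀ ε, 0 < ε → AEStronglyMeasurable
      (fun s => deriv θ s * (gc θ l 1 s * G 0 ε s - gc θ l 0 s * G 1 ε s))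
      (volume.restrict (Ioc 0 τ)) := by
    intro ε hε
    have c1 := hGc 0 ε hε
    have c2 := hGc 1 ε hε
    have c3 := hg 0
    have c4 := hg 1
    exact (measurable_deriv θ).aestronglyMeasurable.mul
      (Continuous.aestronglyMeasurable (by fun_prop))
  have tR : Tendsto (fun ε => ∫ s in Ioc (0:ℝ) τ,
      deriv θ s * (gc θ l 1 s * G 0 ε s - gc θ l 0 s * G 1 ε s)) (𝓝[>] 0) (𝓝 0) := by
    have hz : (∫ s in Ioc (0:ℝ) τ,
        deriv θ s * (gc θ l 1 s * gc θ l 0 s - gc θ l 0 s * gc θ l 1 s)) = 0 := by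
      simp [mul_comm]
    suffices hh : Tendsto (fun ε => ∫ s in Ioc (0:ℝ) τ,
        deriv θ s * (gc θ l 1 s * G 0 ε s - gc θ l 0 s * G 1 ε s)) (𝓝[>] 0) (𝓝 (∫ s in Ioc (0:ℝ) τ,
        deriv θ s * (gc θ l 1 s * gc θ l 0 s - gc θ l 0 s * gc θ l 1 s))) by rwa [hz] at hh
    apply tendsto_integral_filter_of_dominated_convergence (fun _ => K * (2 * (M * M)))
    · filter_upwards [self_mem_nhdsWithin] with ε hε using hms ε hε
    · filter_upwards [self_mem_nhdsWithin] with ε hε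
      exact Eventually.of_forall (hbd ε hε)
    · exact integrable_const _
    · exact Eventually.of_forall fun s => (((tG 0 s).const_mul _).sub
        ((tG 1 s).const_mul _)).const_mul _
  have T : Tendsto (fun ε : ℝ =>
      ((mo (moll η ε) (gc θ l 0) τ ^ 2 - mo (moll η ε) (gc θ l 0) 0 ^ 2) / 2
        + (mo (moll η ε) (gc θ l 1) τ ^ 2 - mo (moll η ε) (gc θ l 1) 0 ^ 2) / 2)
      - (-((∫ s in Ioc (0:ℝ) τ, gc θ l 0 s * mo (deriv (moll η ε)) (mo (moll η ε) (gc θ l 0)) s)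
          + (∫ s in Ioc (0:ℝ) τ, gc θ l 1 s * mo (deriv (moll η ε)) (mo (moll η ε) (gc θ l 1)) s)
          + ∫ s in Ioc (0:ℝ) τ, deriv θ s * (gc θ l 1 s * G 0 ε s - gc θ l 0 s * G 1 ε s))
        + (gc θ l 0 τ * G 0 ε τ + gc θ l 1 τ * G 1 ε τ)
        - (gc θ l 0 0 * G 0 ε 0 + gc θ l 1 0 * G 1 ε 0))) (𝓝[>] 0) (𝓝 0) := by
    have := (((((tm 0 τ).pow 2).sub ((tm 0 0).pow 2)).div_const 2).add
      ((((tm 1 τ).pow 2).sub ((tm 1 0).pow 2)).div_const 2)).sub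
      (((((tF 0).add (tF 1)).add tR).neg.add
        (((tG 0 τ).const_mul (gc θ l 0 τ)).add ((tG 1 τ).const_mul (gc θ l 1 τ)))).sub
        (((tG 0 0).const_mul (gc θ l 0 0)).add ((tG 1 0).const_mul (gc θ l 1 0))))
    refine this.trans (le_of_eq ?_)
    congr 1; ring
  refine T.congr' ?_
  filter_upwards [self_mem_nhdsWithin] with ε hε
  have hε : 0 < ε := hε
  have hkc := moll_cont η ε hηc
  have hks := moll_supp η ε hε hη_supp
  have hkd := moll_diff η ε hη
  have hdc : Continuous (deriv (moll η ε)) := hkd.continuous_deriv le_rfl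
  have hds : HasCompactSupport (deriv (moll η ε)) := hks.deriv
  have hmc := fun i => mo_cont _ _ hkc hks (hg i)
  have dm := fun i => mo_deriv _ _ hkd hks (hg i)
  have dG := fun i => mo_deriv _ _ hkd hks (hmc i)
  have dmc := fun i => mo_cont _ _ hdc hds (hg i)
  have dGc := fun i => mo_cont _ _ hdc hds (hmc i)
  have hdiff : ∀ᵐ t ∂(volume.restrict (Ioc (0:ℝ) τ)), DifferentiableAt ℝ θ t :=
    ae_restrict_of_ae hK.ae_differentiableAt
  have l0 := lmoll_zero η θ l ε hηc hη_supp hθ hl_cont hε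
  have l1 := lmoll_one η θ l ε hηc hη_supp hθ hl_cont hε
  have L0 := Lmoll_zero η θ l ε hηc hη_supp hθ hl_cont hε
  have L1 := Lmoll_one η θ l ε hηc hη_supp hθ hl_cont hε
  have ic : ∀ f : ℝ → ℝ, Continuous f → Integrable f (volume.restrict (Ioc (0:ℝ) τ)) :=
    fun f hf => (hf.integrableOn_Icc (a := 0) (b := τ)).mono_set Ioc_subset_Icc_self
  -- left-hand side
  have E1 : ∫ t in Ioc (0:ℝ) τ, dot2 (dVec (lmoll η θ l ε) t) (lmoll η θ l ε t)
      = (mo (moll η ε) (gc θ l 0) τ ^ 2 - mo (moll η ε) (gc θ l 0) 0 ^ 2) / 2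
        + (mo (moll η ε) (gc θ l 1) τ ^ 2 - mo (moll η ε) (gc θ l 1) 0 ^ 2) / 2 := by
    rw [← ftc_sq _ _ (dm 0) (dmc 0) τ hτ, ← ftc_sq _ _ (dm 1) (dmc 1) τ hτ,
      ← integral_add (ic (fun t => _ * _) ((dmc 0).mul (hmc 0)))
        (ic (fun t => _ * _) ((dmc 1).mul (hmc 1)))]
    apply integral_congr_ae
    filter_upwards [hdiff] with t ht
    obtain ⟨d0, d1⟩ := dVec_rot θ _ _ _ t _ _ l0 l1 ht (dm 0 t) (dm 1 t)
    have hsc := Real.sin_sq_add_cos_sq (θ t)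
    rw [dot2, d0, d1, l0, l1]
    linear_combination (mo (deriv (moll η ε)) (gc θ l 0) t * mo (moll η ε) (gc θ l 0) t
      + mo (deriv (moll η ε)) (gc θ l 1) t * mo (moll η ε) (gc θ l 1) t) * hsc
  have E2 : ∫ s in Ioc (0:ℝ) τ, dot2 (l s) (dVec (Lmoll η θ l ε) s)
      = (∫ s in Ioc (0:ℝ) τ, gc θ l 0 s * mo (deriv (moll η ε)) (mo (moll η ε) (gc θ l 0)) s)
          + (∫ s in Ioc (0:ℝ) τ, gc θ l 1 s * mo (deriv (moll η ε)) (mo (moll η ε) (gc θ l 1)) s)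
          + ∫ s in Ioc (0:ℝ) τ, deriv θ s * (gc θ l 1 s * G 0 ε s - gc θ l 0 s * G 1 ε s) := by
    have i0 := ic (fun s => gc θ l 0 s * mo (deriv (moll η ε)) (mo (moll η ε) (gc θ l 0)) s)
      ((hg 0).mul (dGc 0))
    have i1 := ic (fun s => gc θ l 1 s * mo (deriv (moll η ε)) (mo (moll η ε) (gc θ l 1)) s)
      ((hg 1).mul (dGc 1))
    have i2 : Integrable (fun s => deriv θ s * (gc θ l 1 s * G 0 ε s - gc θ l 0 s * G 1 ε s))
        (volume.restrict (Ioc (0:ℝ) τ)) :=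
      (integrable_const (K * (2 * (M * M)) : ℝ)).mono' (hms ε hε)
        (Eventually.of_forall (hbd ε hε))
    rw [← integral_add i0 i1]
    refine Eq.trans ?_ (integral_add (i0.add i1) i2)
    apply integral_congr_ae
    filter_upwards [hdiff] with t ht
    obtain ⟨d0, d1⟩ := dVec_rot θ _ _ _ t _ _ L0 L1 ht (dG 0 t) (dG 1 t)
    rw [dot2, d0, d1]
    simp only [Pi.add_apply, Pi.mul_apply, gc_zero θ l t, gc_one θ l t, hG]
    ring
  have E3 : ∀ s, dot2 (l s) (Lmoll η θ l ε s) = gc θ l 0 s * G 0 ε s + gc θ l 1 s * G 1 ε s := by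
    intro s
    rw [dot2, L0, L1, gc_zero θ l s, gc_one θ l s]
    ring
  rw [E1, E2, E3, E3]
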